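/- Let n ≥ 2 and K ⊆ J ⊆ [n-1]. For g ∈ SL_n(ℂ), the following are equivalent: (a) (g^{-1} f g)_{i,j} = 0 for all j > i+1, g ∈ B^+ ẇ_K B^-, and g ∈ B^- ẇ_J B^-; (b) there exist a J-Toeplitz matrix x ∈ SL_n(ℂ) and b ∈ B^- such that g = x ẇ_J b, Δ_i(x ẇ_J) = 0 for all i ∈ K, and Δ_i(x ẇ_J) ≠ 0 for all i ∈ [n-1] − K. -/

import Mathlib

open Matrix

attribute [local instance] Classical.propDecidable

noncomputable section

namespace PetersonPaper

/-- Zero above the diagonal: `M i j = 0` whenever `i < j` (lower triangular). -/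
def lowerTri (n : ℕ) (M : Matrix (Fin n) (Fin n) ℂ) : Prop :=
  ∀ i j : Fin n, i < j → M i j = 0

/-- Zero below the diagonal: `M i j = 0` whenever `j < i` (upper triangular). -/
def upperTri (n : ℕ) (M : Matrix (Fin n) (Fin n) ℂ) : Prop :=
  ∀ i j : Fin n, j < i → M i j = 0

/-- The regular nilpotent matrix `f`, with `(i,j)` entry `1` iff `i = j+1`. -/
def fMat (n : ℕ) : Matrix (Fin n) (Fin n) ℂ :=
  fun i j => if (i : ℕ) = (j : ℕ) + 1 then 1 else 0

/-- `Δ_i(g)`: the lower-right `(n-i)×(n-i)` minor of `g`.  Here `i : Fin (n-1)`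
encodes the (1-based) index `i.1 + 1 ∈ {1,…,n-1}`. -/
def Delta (n : ℕ) (g : Matrix (Fin n) (Fin n) ℂ) (i : Fin (n-1)) : ℂ :=
  (g.submatrix
    (fun k : Fin (n - (i.1 + 1)) => (⟨k.1 + (i.1 + 1), by have := k.isLt; omega⟩ : Fin n))
    (fun k : Fin (n - (i.1 + 1)) => (⟨k.1 + (i.1 + 1), by have := k.isLt; omega⟩ : Fin n))).det

/-- `q_i(g) = -(g⁻¹ f g)_{i,i+1}` (1-based indices; `i : Fin (n-1)` encodes `i.1+1`). -/
def qfun (n : ℕ) (g : Matrix (Fin n) (Fin n) ℂ) (i : Fin (n-1)) : ℂ :=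
  -((g⁻¹ * fMat n * g) (⟨i.1, by have := i.isLt; omega⟩ : Fin n)
      (⟨i.1 + 1, by have := i.isLt; omega⟩ : Fin n))

/-- The (0-based) gap `c` (between positions `c` and `c+1` of `Fin n`) belongs to
`J ⊆ [n-1]`; `c` encodes the 1-based element `c+1` of `[n-1]`. -/
def gapMem (n : ℕ) (J : Set (Fin (n-1))) (c : ℕ) : Prop :=
  ∃ h : c < n - 1, (⟨c, h⟩ : Fin (n-1)) ∈ J

/-- The (0-based) first position of the block of the partition of `{0,…,n-1}`
determined by `J` containing the position `p`. -/
def blockStart (n : ℕ) (J : Set (Fin (n-1))) (p : Fin n) : ℕ :=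
  sInf {a : ℕ | a ≤ p.1 ∧ ∀ c : ℕ, a ≤ c → c < p.1 → gapMem n J c}

/-- The (0-based) last position of the block of the partition of `{0,…,n-1}`
determined by `J` containing the position `p`. -/
def blockEnd (n : ℕ) (J : Set (Fin (n-1))) (p : Fin n) : ℕ :=
  sSup {b : ℕ | b < n ∧ p.1 ≤ b ∧ ∀ c : ℕ, p.1 ≤ c → c < b → gapMem n J c}

lemma blockStart_le (n : ℕ) (J : Set (Fin (n-1))) (p : Fin n) : blockStart n J p ≤ p.1 :=
  Nat.sInf_le ⟨le_refl _, fun c hc1 hc2 => absurd (lt_of_le_of_lt hc1 hc2) (lt_irrefl _)⟩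

lemma blockEnd_mem (n : ℕ) (J : Set (Fin (n-1))) (p : Fin n) :
    blockEnd n J p ∈ {b : ℕ | b < n ∧ p.1 ≤ b ∧ ∀ c : ℕ, p.1 ≤ c → c < b → gapMem n J c} :=
  Nat.sSup_mem
    ⟨p.1, p.isLt, le_refl _, fun c hc1 hc2 => absurd (lt_of_le_of_lt hc1 hc2) (lt_irrefl _)⟩
    ⟨n, fun _ hb => le_of_lt hb.1⟩

lemma blockEnd_lt (n : ℕ) (J : Set (Fin (n-1))) (p : Fin n) : blockEnd n J p < n :=
  (blockEnd_mem n J p).1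

lemma le_blockEnd (n : ℕ) (J : Set (Fin (n-1))) (p : Fin n) : p.1 ≤ blockEnd n J p :=
  (blockEnd_mem n J p).2.1

/-- The representative `ẇ_J` of the longest element of the Young subgroup determined
by `J ⊆ [n-1]`: block diagonal, with the antidiagonal matrix with entries
`(-1)^(row - blockStart)` on each block of the partition determined by `J`. -/
def wJ (n : ℕ) (J : Set (Fin (n-1))) : Matrix (Fin n) (Fin n) ℂ :=
  fun p q =>
    if (p : ℕ) + (q : ℕ) = blockStart n J p + blockEnd n J p
    then (-1 : ℂ) ^ ((p : ℕ) - blockStart n J p) else 0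

/-- A `J`-Toeplitz matrix: block diagonal with respect to the partition determined by
`J`, each block being lower triangular Toeplitz with `1`'s on the diagonal. -/
def IsJToeplitz (n : ℕ) (J : Set (Fin (n-1))) (x : Matrix (Fin n) (Fin n) ℂ) : Prop :=
  ∃ c : ℕ → ℕ → ℂ, (∀ a, c a 0 = 1) ∧
    ∀ p q : Fin n, x p q =
      if blockStart n J p = blockStart n J q ∧ (q : ℕ) ≤ (p : ℕ)
      then c (blockStart n J p) ((p : ℕ) - (q : ℕ)) else 0

/-- `g ∈ B⁺ ẇ_K B⁻` (at the level of matrices of determinant 1). -/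
def inBruhatPlus (n : ℕ) (K : Set (Fin (n-1))) (g : Matrix (Fin n) (Fin n) ℂ) : Prop :=
  ∃ b₁ b₂ : Matrix (Fin n) (Fin n) ℂ,
    b₁.det = 1 ∧ b₂.det = 1 ∧ upperTri n b₁ ∧ lowerTri n b₂ ∧ g = b₁ * wJ n K * b₂

/-- `g ∈ B⁻ ẇ_J B⁻` (at the level of matrices of determinant 1). -/
def inBruhatMinus (n : ℕ) (J : Set (Fin (n-1))) (g : Matrix (Fin n) (Fin n) ℂ) : Prop :=
  ∃ b₁ b₂ : Matrix (Fin n) (Fin n) ℂ,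
    b₁.det = 1 ∧ b₂.det = 1 ∧ lowerTri n b₁ ∧ lowerTri n b₂ ∧ g = b₁ * wJ n J * b₂

/-!
Write `w` for `ẇ_J` and `M` for `B⁻¹ f B`, with `B` lower unitriangular. Conjugation by `w`
reverses the diagonal blocks and keeps their order, so `w⁻¹ M w` is lower Hessenberg exactly when
each diagonal block of `M` vanishes below its first subdiagonal. If `g = B w b ∈ B⁻ w B⁻`, then the
Hessenberg condition on `g⁻¹ f g` forces the block diagonal part `x` of `B` to commute with the
block diagonal part of `f`, which makes `x` a `J`-Toeplitz matrix. The rest of `B` lies in the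
unipotent radical of the block lower triangular matrices; it can be moved through `w` and absorbed
in `b`.

For the cell `B⁺ ẇ_K B⁻`, use the Bruhat decomposition `u g = σ l` with `u` upper and `l` lower
triangular. The minor `Δ_i(g)` is nonzero if and only if `σ` preserves `{i + 1, …, n}`. The entries
of `u f u⁻¹` on the first subdiagonal are nonzero, and `σ` carries them to entries of the Hessenberg
matrix `l (g⁻¹ f g) l⁻¹`; hence `σ p ≤ σ (p + 1) + 1` for all `p`. A permutation descending by at
most one at each step is the longest element of the Young subgroup given by the tails it preserves.
-/

/-! ### Triangular and Hessenberg matrices -/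

section Triangular

variable {ι R : Type*} [CommRing R]

/-- The block diagonal part of a matrix, for the blocks given by the fibres of `b`. -/
def blockPart {α : Type*} (b : ι → α) (M : Matrix ι ι R) : Matrix ι ι R :=
  of fun i j => if b i = b j then M i j else 0

lemma blockPart_apply_of_eq {α : Type*} {b : ι → α} {i j : ι} (h : b i = b j)
    (M : Matrix ι ι R) : blockPart b M i j = M i j :=
  if_pos h

lemma blockPart_apply_of_ne {α : Type*} {b : ι → α} {i j : ι} (h : b i ≠ b j)
    (M : Matrix ι ι R) : blockPart b M i j = 0 :=
  if_neg h

@[simp]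
lemma blockPart_one [DecidableEq ι] {α : Type*} (b : ι → α) :
    blockPart b (1 : Matrix ι ι R) = 1 := by
  ext i j
  by_cases h : b i = b j
  · exact blockPart_apply_of_eq h 1
  · rw [blockPart_apply_of_ne h, one_apply_ne fun hij => h (congrArg b hij)]

@[simp]
lemma blockPart_blockPart {α : Type*} (b : ι → α) (M : Matrix ι ι R) :
    blockPart b (blockPart b M) = blockPart b M := by
  ext i j
  by_cases h : b i = b j
  · exact blockPart_apply_of_eq h _
  · rw [blockPart_apply_of_ne h, blockPart_apply_of_ne h]

lemma isLowerTriangular_blockPart [LinearOrder ι] {α : Type*} {M : Matrix ι ι R}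
    (hM : M.IsLowerTriangular) (b : ι → α) : (blockPart b M).IsLowerTriangular := by
  intro i j hlt
  by_cases h : b i = b j
  · rw [blockPart_apply_of_eq h, hM hlt]
  · exact blockPart_apply_of_ne h M

variable [Fintype ι] {A B M : Matrix ι ι R}

lemma blockTriangular_inv [DecidableEq ι] {α : Type*} [LinearOrder α] {b : ι → α}
    (hM : M.BlockTriangular b) : M⁻¹.BlockTriangular b := by
  by_cases hdet : IsUnit M.det
  · have := invertibleOfIsUnitDet M hdet
    exact blockTriangular_inv_of_blockTriangular hM
  · rw [nonsing_inv_apply_not_isUnit M hdet]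
    exact blockTriangular_zero

lemma apply_self_ne_zero_of_isLowerTriangular [DecidableEq ι] [LinearOrder ι]
    (hM : M.IsLowerTriangular) (hdet : M.det ≠ 0) (i : ι) : M i i ≠ 0 := by
  rw [det_of_isLowerTriangular M hM] at hdet
  exact fun h => hdet (Finset.prod_eq_zero (Finset.mem_univ i) h)

lemma det_eq_one_of_isLowerTriangular [DecidableEq ι] [LinearOrder ι] (hM : M.IsLowerTriangular)
    (hdiag : ∀ i, M i i = 1) : M.det = 1 := by
  rw [det_of_isLowerTriangular M hM, Finset.prod_eq_one fun i _ => hdiag i]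

lemma mul_apply_self_of_isLowerTriangular [LinearOrder ι] (hA : A.IsLowerTriangular)
    (hB : B.IsLowerTriangular) (i : ι) : (A * B) i i = A i i * B i i := by
  rw [mul_apply]
  refine Finset.sum_eq_single i (fun k _ hk => ?_) fun h => absurd (Finset.mem_univ i) h
  obtain hlt | hgt := lt_or_gt_of_ne hk
  · rw [hB hlt, mul_zero]
  · rw [hA hgt, zero_mul]

lemma blockPart_mul_of_monotone [LinearOrder ι] {α : Type*} [LinearOrder α] {b : ι → α}
    (hb : Monotone b) (hA : A.IsLowerTriangular) (hB : B.IsLowerTriangular) :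
    blockPart b (A * B) = blockPart b A * blockPart b B := by
  ext i j
  rw [mul_apply]
  by_cases hij : b i = b j
  · rw [blockPart_apply_of_eq hij, mul_apply]
    refine Finset.sum_congr rfl fun k _ => ?_
    by_cases hik : b i = b k
    · rw [blockPart_apply_of_eq hik, blockPart_apply_of_eq (hik.symm.trans hij)]
    · rw [blockPart_apply_of_ne hik, zero_mul]
      obtain hlt | hle := lt_or_ge i k
      · rw [hA hlt, zero_mul]
      · have hkj : k < j := hb.reflect_lt (hij ▸ (hb hle).lt_of_ne (Ne.symm hik))
        rw [hB hkj, mul_zero]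
  · rw [blockPart_apply_of_ne hij]
    refine (Finset.sum_eq_zero fun k _ => ?_).symm
    by_cases hik : b i = b k
    · rw [blockPart_apply_of_ne (fun hkj => hij (hik.trans hkj)) B, mul_zero]
    · rw [blockPart_apply_of_ne hik, zero_mul]

lemma blockPart_inv_blockPart_mul [DecidableEq ι] [LinearOrder ι] {α : Type*} [LinearOrder α]
    {b : ι → α} (hb : Monotone b) (hM : M.IsLowerTriangular) (hdet : IsUnit (blockPart b M).det) :
    blockPart b ((blockPart b M)⁻¹ * M) = 1 := by
  have hx := isLowerTriangular_blockPart hM b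
  have hinv := blockTriangular_inv hx
  calc blockPart b ((blockPart b M)⁻¹ * M)
      = blockPart b (blockPart b M)⁻¹ * blockPart b (blockPart b M) := by
        rw [blockPart_mul_of_monotone hb hinv hM, blockPart_blockPart]
    _ = 1 := by
        rw [← blockPart_mul_of_monotone hb hinv hx, nonsing_inv_mul _ hdet, blockPart_one]

end Triangular

section Hessenberg

variable {n : ℕ} {R : Type*} [Semiring R] {A H : Matrix (Fin n) (Fin n) R} {p q : Fin n}

/-- Lower Hessenberg matrices: all entries above the first superdiagonal vanish. The Peterson
condition on `g` is that `g⁻¹ f g` is lower Hessenberg. -/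
def IsLowerHessenberg (M : Matrix (Fin n) (Fin n) R) : Prop :=
  ∀ i j : Fin n, (i : ℕ) + 1 < j → M i j = 0

lemma IsLowerHessenberg.lower_mul (hA : A.IsLowerTriangular) (hH : IsLowerHessenberg H) :
    IsLowerHessenberg (A * H) := by
  intro i j hij
  rw [mul_apply]
  refine Finset.sum_eq_zero fun k _ => ?_
  obtain hlt | hle := lt_or_ge i k
  · rw [hA hlt, zero_mul]
  · rw [hH k j (by omega), mul_zero]

lemma IsLowerHessenberg.mul_lower (hH : IsLowerHessenberg H) (hA : A.IsLowerTriangular) :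
    IsLowerHessenberg (H * A) := by
  intro i j hij
  rw [mul_apply]
  refine Finset.sum_eq_zero fun k _ => ?_
  obtain hlt | hle := lt_or_ge k j
  · rw [hA hlt, mul_zero]
  · rw [hH i k (by omega), zero_mul]

lemma IsLowerHessenberg.lower_mul_apply_superdiag (hA : A.IsLowerTriangular)
    (hH : IsLowerHessenberg H) (hpq : (q : ℕ) = p + 1) : (A * H) p q = A p p * H p q := by
  rw [mul_apply]
  refine Finset.sum_eq_single p (fun k _ hk => ?_) (fun h => absurd (Finset.mem_univ p) h)
  obtain hlt | hgt := lt_or_gt_of_ne hk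
  · rw [hH k q (by omega), mul_zero]
  · rw [hA hgt, zero_mul]

lemma IsLowerHessenberg.mul_lower_apply_superdiag (hH : IsLowerHessenberg H)
    (hA : A.IsLowerTriangular) (hpq : (q : ℕ) = p + 1) : (H * A) p q = H p q * A q q := by
  rw [mul_apply]
  refine Finset.sum_eq_single q (fun k _ hk => ?_) (fun h => absurd (Finset.mem_univ q) h)
  obtain hlt | hgt := lt_or_gt_of_ne hk
  · rw [hA hlt, mul_zero]
  · rw [hH p k (by omega), zero_mul]

lemma IsLowerHessenberg.conj_mul_lower {R : Type*} [CommRing R] {A g l : Matrix (Fin n) (Fin n) R}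
    (hg : IsLowerHessenberg (g⁻¹ * A * g)) (hl : l.IsLowerTriangular) :
    IsLowerHessenberg ((g * l)⁻¹ * A * (g * l)) := by
  have h := (IsLowerHessenberg.lower_mul (blockTriangular_inv hl) hg).mul_lower hl
  rwa [Matrix.mul_inv_rev, show l⁻¹ * g⁻¹ * A * (g * l) = l⁻¹ * (g⁻¹ * A * g) * l by
    simp only [Matrix.mul_assoc]]

/-- The regular nilpotent matrix `f`, with `1`s on the first subdiagonal. -/
def lowerShift (n : ℕ) (R : Type*) [Zero R] [One R] : Matrix (Fin n) (Fin n) R :=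
  fun i j => if (i : ℕ) = (j : ℕ) + 1 then 1 else 0

lemma lowerShift_apply_of_eq_succ {R : Type*} [Zero R] [One R] (hpq : (p : ℕ) = q + 1) :
    lowerShift n R p q = 1 :=
  if_pos hpq

lemma upper_mul_lowerShift_mul_upper_apply_ne_zero {R : Type*} [CommRing R] [IsDomain R]
    {u v : Matrix (Fin n) (Fin n) R} (hu : u.IsUpperTriangular) (hv : v.IsUpperTriangular)
    (hudet : u.det ≠ 0) (hvdet : v.det ≠ 0) (hpq : (q : ℕ) = p + 1) :
    (u * lowerShift n R * v) q p ≠ 0 := by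
  have hf : IsLowerHessenberg (lowerShift n R)ᵀ := fun i j hij =>
    if_neg (show ¬ (j : ℕ) = i + 1 by omega)
  have hfv := IsLowerHessenberg.lower_mul hv.transpose hf
  rw [← transpose_apply (u * lowerShift n R * v), transpose_mul, transpose_mul,
    ← Matrix.mul_assoc, hfv.mul_lower_apply_superdiag hu.transpose hpq,
    hf.lower_mul_apply_superdiag hv.transpose hpq, transpose_apply (lowerShift n R),
    lowerShift_apply_of_eq_succ hpq, mul_one]
  rw [← det_transpose] at hudet hvdet
  exact mul_ne_zero (apply_self_ne_zero_of_isLowerTriangular hv.transpose hvdet p)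
    (apply_self_ne_zero_of_isLowerTriangular hu.transpose hudet q)

end Hessenberg

section Minors

variable {n : ℕ} {R : Type*} [CommRing R] {A B : Matrix (Fin n) (Fin n) R}

/-- The minor of `M` on the rows and columns `m, …, n - 1` (counted from `0`). The paper's
`Δ_i` for `i ∈ {1, …, n - 1}` is `lowerRightMinor · i`. -/
def lowerRightMinor (M : Matrix (Fin n) (Fin n) R) (m : ℕ) : R :=
  (M.toSquareBlockProp fun k => m ≤ (k : ℕ)).det

lemma lowerRightMinor_transpose (A : Matrix (Fin n) (Fin n) R) (m : ℕ) :
    lowerRightMinor Aᵀ m = lowerRightMinor A m :=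
  det_transpose (A.toSquareBlockProp _)

lemma lowerRightMinor_mul_lower (A : Matrix (Fin n) (Fin n) R) (hB : B.IsLowerTriangular)
    (m : ℕ) : lowerRightMinor (A * B) m = lowerRightMinor A m * lowerRightMinor B m := by
  have hzero : B.toBlock (fun k => ¬ m ≤ (k : ℕ)) (fun k => m ≤ (k : ℕ)) = 0 := by
    ext i j
    exact hB (show i.1 < j.1 by have := i.2; have := j.2; omega)
  rw [lowerRightMinor, toSquareBlockProp, toBlock_mul_eq_add _ (fun k : Fin n => m ≤ (k : ℕ)),
    hzero, Matrix.mul_zero, add_zero]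
  exact det_mul _ _

lemma lowerRightMinor_ne_zero_of_isLowerTriangular (hA : A.IsLowerTriangular) (hdet : A.det ≠ 0)
    (m : ℕ) : lowerRightMinor A m ≠ 0 := by
  rw [twoBlockTriangular_det A (fun k => m ≤ (k : ℕ))] at hdet
  · exact left_ne_zero_of_mul hdet
  · intro i hi j hj
    exact hA (show i < j by omega)

variable [IsDomain R]

lemma lowerRightMinor_mul_lower_eq_zero_iff (A : Matrix (Fin n) (Fin n) R)
    (hB : B.IsLowerTriangular) (hdet : B.det ≠ 0) (m : ℕ) :
    lowerRightMinor (A * B) m = 0 ↔ lowerRightMinor A m = 0 := by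
  rw [lowerRightMinor_mul_lower A hB, mul_eq_zero,
    or_iff_left (lowerRightMinor_ne_zero_of_isLowerTriangular hB hdet m)]

lemma lowerRightMinor_upper_mul_eq_zero_iff (hA : A.IsUpperTriangular) (hdet : A.det ≠ 0)
    (B : Matrix (Fin n) (Fin n) R) (m : ℕ) :
    lowerRightMinor (A * B) m = 0 ↔ lowerRightMinor B m = 0 := by
  rw [← lowerRightMinor_transpose, transpose_mul, ← lowerRightMinor_transpose B]
  exact lowerRightMinor_mul_lower_eq_zero_iff _ hA.transpose (by rwa [det_transpose]) m

end Minors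

/-! ### The Bruhat decomposition -/

section BruhatDecomposition

variable {ι F : Type*} [LinearOrder ι] [Field F]

/-- The pivot `q` of `v` is the position of its last nonzero coordinate; row reduction with
operations from below makes the pivots of the rows distinct. -/
def IsPivot (v : ι → F) (q : ι) : Prop :=
  v q ≠ 0 ∧ ∀ r, q < r → v r = 0

lemma exists_isPivot [Finite ι] {v : ι → F} (hv : v ≠ 0) : ∃ q, IsPivot v q := by
  obtain ⟨q, hq, hmax⟩ := Set.exists_max_image {i | v i ≠ 0} id (Set.toFinite _)
    (Function.ne_iff.1 hv)
  refine ⟨q, hq, fun r hr => ?_⟩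
  by_contra hne
  exact hr.not_ge (hmax r hne)

lemma exists_sub_smul_pivot_lt {v w : ι → F} {q : ι} (hv : IsPivot v q) (hw : IsPivot w q) :
    ∃ a : F, ∀ r, IsPivot (v - a • w) r → r < q := by
  refine ⟨v q / w q, fun r hr => lt_of_not_ge fun hle => hr.1 ?_⟩
  obtain rfl | hlt := hle.eq_or_lt
  · simp [div_mul_cancel₀ _ hw.1]
  · simp [hv.2 r hlt, hw.2 r hlt]

/-- The coefficient vectors of the row operations that add multiples of later rows to row `i`. -/
def IsRowOp (i : ι) (c : ι → F) : Prop :=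
  c i = 1 ∧ ∀ j, j < i → c j = 0

lemma isRowOp_single [DecidableEq ι] (i : ι) : IsRowOp i (Pi.single i (1 : F)) :=
  ⟨Pi.single_eq_same i 1, fun _ hj => Pi.single_eq_of_ne hj.ne 1⟩

lemma IsRowOp.sub_smul {i j : ι} {c d : ι → F} (hc : IsRowOp i c) (hd : IsRowOp j d) (hij : i < j)
    (a : F) : IsRowOp i (c - a • d) :=
  ⟨by simp [hc.1, hd.2 i hij], fun k hk => by simp [hc.2 k hk, hd.2 k (hk.trans hij)]⟩

variable [Fintype ι] [DecidableEq ι] {g : Matrix ι ι F}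

lemma IsRowOp.vecMul_ne_zero {i : ι} {c : ι → F} (hc : IsRowOp i c) (hdet : g.det ≠ 0) :
    c ᵥ* g ≠ 0 := by
  intro h
  have := eq_zero_of_vecMul_eq_zero hdet h
  exact one_ne_zero (hc.1.symm.trans (congrFun this i))

lemma exists_isRowOp_minimal_pivot (hdet : g.det ≠ 0) (i : ι) :
    ∃ c q, IsRowOp i c ∧ IsPivot (c ᵥ* g) q ∧
      ∀ c' q', IsRowOp i c' → IsPivot (c' ᵥ* g) q' → q ≤ q' := by
  obtain ⟨q₀, hq₀⟩ := exists_isPivot ((isRowOp_single i).vecMul_ne_zero hdet)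
  obtain ⟨q, ⟨c, hc, hq⟩, hmin⟩ := wellFounded_lt.has_min
    {q | ∃ c, IsRowOp i c ∧ IsPivot (c ᵥ* g) q} ⟨q₀, _, isRowOp_single i, hq₀⟩
  exact ⟨c, q, hc, hq, fun c' q' hc' hq' => not_lt.1 (hmin q' ⟨c', hc', hq'⟩)⟩

theorem exists_upper_mul_eq_permMatrix_mul_lower (hdet : g.det ≠ 0) :
    ∃ (u L : Matrix ι ι F) (σ : Equiv.Perm ι), u.IsUpperTriangular ∧ (∀ i, u i i = 1) ∧
      L.IsLowerTriangular ∧ u * g = σ.permMatrix F * L := by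
  choose u pivot hu hpivot hmin using exists_isRowOp_minimal_pivot hdet
  have hne : ∀ i j, i < j → pivot i ≠ pivot j := by
    intro i j hij heq
    obtain ⟨a, ha⟩ := exists_sub_smul_pivot_lt (hpivot i) (heq ▸ hpivot j)
    have hop := (hu i).sub_smul (hu j) hij a
    obtain ⟨r, hr⟩ := exists_isPivot (hop.vecMul_ne_zero hdet)
    refine (hmin i _ r hop hr).not_gt (ha r ?_)
    rwa [sub_vecMul, smul_vecMul] at hr
  have hinj : Function.Injective pivot := fun i j hij => by
    by_contra h
    exact (lt_or_gt_of_ne h).elim (fun h => hne i j h hij) fun h => hne j i h hij.symm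
  let σ : Equiv.Perm ι := Equiv.ofBijective pivot (Finite.injective_iff_bijective.1 hinj)
  refine ⟨of u, (of u * g).submatrix σ.symm id, σ, fun i j hij => (hu i).2 j hij,
    fun i => (hu i).1, fun i j hij => ?_, ?_⟩
  · refine (hpivot (σ.symm i)).2 j ?_
    rwa [show pivot (σ.symm i) = i from σ.apply_symm_apply i]
  · rw [PEquiv.toMatrix_toPEquiv_mul, submatrix_submatrix]
    simp

end BruhatDecomposition

/-! ### Blocks and their reversal -/

section Blocks

variable {n : ℕ} {J : Set (Fin (n - 1))} {p q : Fin n} {a c : ℕ}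

lemma gapMem_of_blockStart_le (h₁ : blockStart n J p ≤ c) (h₂ : c < p) : gapMem n J c :=
  (Nat.sInf_mem (s := {a : ℕ | a ≤ p.1 ∧ ∀ c : ℕ, a ≤ c → c < p.1 → gapMem n J c})
    ⟨p, le_rfl, fun _ h h' => absurd h h'.not_ge⟩).2 c h₁ h₂

lemma blockStart_le_of_forall_gapMem (ha : a ≤ p) (h : ∀ c, a ≤ c → c < p → gapMem n J c) :
    blockStart n J p ≤ a :=
  Nat.sInf_le ⟨ha, h⟩

lemma le_blockEnd_of_forall_gapMem (han : a < n) (ha : (p : ℕ) ≤ a)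
    (h : ∀ c : ℕ, p ≤ c → c < a → gapMem n J c) : a ≤ blockEnd n J p :=
  le_csSup ⟨n, fun _ hb => hb.1.le⟩ ⟨han, ha, h⟩

lemma gapMem_of_mem_block (h₁ : blockStart n J p ≤ c) (h₂ : c < blockEnd n J p) :
    gapMem n J c := by
  rcases lt_or_ge c p with h | h
  · exact gapMem_of_blockStart_le h₁ h
  · exact (blockEnd_mem n J p).2.2 c h h₂

lemma not_gapMem_of_succ_eq_blockStart (h : c + 1 = blockStart n J p) : ¬ gapMem n J c := by
  intro hc
  have hp := blockStart_le n J p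
  have : blockStart n J p ≤ c := blockStart_le_of_forall_gapMem (by omega) fun d hd hdp => by
    obtain rfl | hd := hd.eq_or_lt
    · exact hc
    · exact gapMem_of_blockStart_le (by omega) hdp
  omega

lemma not_gapMem_blockEnd : ¬ gapMem n J (blockEnd n J p) := by
  intro hc
  have hp := le_blockEnd n J p
  have hn := hc.1
  have : blockEnd n J p + 1 ≤ blockEnd n J p :=
    le_blockEnd_of_forall_gapMem (by omega) (by omega) fun d hd hdp => by
      obtain rfl | hd' := (Nat.le_of_lt_succ hdp).eq_or_lt
      · exact hc
      · exact (blockEnd_mem n J p).2.2 d hd hd'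
  omega

lemma blockStart_mono : Monotone (blockStart n J) := by
  intro p q hpq
  have hp := blockStart_le n J p
  by_contra! hlt
  have : blockStart n J p ≤ blockStart n J q :=
    blockStart_le_of_forall_gapMem (by omega) fun c hc hcp =>
      gapMem_of_blockStart_le hc (hcp.trans_le hpq)
  omega

lemma blockStart_eq_iff :
    blockStart n J q = blockStart n J p ↔ blockStart n J p ≤ q ∧ (q : ℕ) ≤ blockEnd n J p := by
  have hp := blockStart_le n J p
  have hq := blockStart_le n J q
  refine ⟨fun h => ⟨h ▸ hq, ?_⟩, fun ⟨h₁, _⟩ => le_antisymm ?_ ?_⟩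
  · rcases le_total (q : ℕ) p with hqp | hpq
    · exact hqp.trans (le_blockEnd n J p)
    · exact le_blockEnd_of_forall_gapMem q.2 hpq fun c hc hcq =>
        gapMem_of_blockStart_le (by omega) hcq
  · exact blockStart_le_of_forall_gapMem h₁ fun c hc hcq => gapMem_of_mem_block hc (by omega)
  · by_contra! hlt
    exact not_gapMem_of_succ_eq_blockStart (J := J) (p := p) (c := blockStart n J p - 1) (by omega)
      (gapMem_of_blockStart_le (p := q) (by omega) (by omega))

lemma blockStart_eq_of_mem_Icc {r : Fin n} (h : blockStart n J p = blockStart n J q)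
    (hpr : p ≤ r) (hrq : r ≤ q) : blockStart n J r = blockStart n J p :=
  (h ▸ blockStart_mono hrq).antisymm (blockStart_mono hpr)

lemma blockStart_blockStart (p : Fin n) :
    blockStart n J ⟨blockStart n J p, (blockStart_le n J p).trans_lt p.2⟩ = blockStart n J p :=
  blockStart_eq_iff.2 ⟨le_rfl, (blockStart_le n J p).trans (le_blockEnd n J p)⟩

lemma blockEnd_le_of_blockStart_eq (h : blockStart n J p = blockStart n J q) :
    blockEnd n J p ≤ blockEnd n J q := by
  by_contra! hlt
  have hq := (blockStart_le n J q).trans (le_blockEnd n J q)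
  exact not_gapMem_blockEnd (gapMem_of_mem_block (p := p) (h ▸ hq) hlt)

lemma blockEnd_eq_of_blockStart_eq (h : blockStart n J p = blockStart n J q) :
    blockEnd n J p = blockEnd n J q :=
  (blockEnd_le_of_blockStart_eq h).antisymm (blockEnd_le_of_blockStart_eq h.symm)

/-- The longest element of the Young subgroup attached to `J`: it reverses every block of the
partition determined by `J`. -/
def blockRev (J : Set (Fin (n - 1))) : Equiv.Perm (Fin n) :=
  Function.Involutive.toPerm
    (fun p => ⟨blockStart n J p + blockEnd n J p - p, by
      have := blockStart_le n J p
      have := blockEnd_lt n J p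
      omega⟩)
    fun p => by
      have hs := blockStart_le n J p
      have he := le_blockEnd n J p
      have hrev := (blockStart_eq_iff (J := J) (p := p)
        (q := ⟨blockStart n J p + blockEnd n J p - p, by have := blockEnd_lt n J p; omega⟩)).2
        ⟨by dsimp only; omega, by dsimp only; omega⟩
      ext
      dsimp only
      rw [hrev, blockEnd_eq_of_blockStart_eq hrev]
      omega

@[simp]
lemma blockRev_blockRev (p : Fin n) : blockRev J (blockRev J p) = p :=
  (blockRev J).left_inv p

lemma blockRev_add_self (p : Fin n) :
    (blockRev J p + p : ℕ) = blockStart n J p + blockEnd n J p := by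
  have := le_blockEnd n J p
  change blockStart n J p + blockEnd n J p - (p : ℕ) + p = _
  omega

@[simp]
lemma blockStart_blockRev (p : Fin n) : blockStart n J (blockRev J p) = blockStart n J p := by
  have := blockStart_le n J p
  have := le_blockEnd n J p
  have := blockRev_add_self (J := J) p
  exact blockStart_eq_iff.2 ⟨by omega, by omega⟩

lemma blockRev_add_self_eq (h : blockStart n J p = blockStart n J q) :
    (blockRev J p + p : ℕ) = blockRev J q + q := by
  rw [blockRev_add_self, blockRev_add_self, h, blockEnd_eq_of_blockStart_eq h]

lemma blockRev_lt_blockRev_iff (hpq : p < q) :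
    blockRev J p < blockRev J q ↔ blockStart n J p ≠ blockStart n J q := by
  refine ⟨fun hlt h => ?_, fun hne => ?_⟩
  · have := blockRev_add_self_eq h
    omega
  · by_contra! hle
    have := blockStart_mono (J := J) hle
    rw [blockStart_blockRev, blockStart_blockRev] at this
    exact hne ((blockStart_mono hpq.le).antisymm this)

lemma blockRev_lt_blockRev_iff_lt_blockStart (hqp : q < p) :
    blockRev J q < blockRev J p ↔ q < blockStart n J p := by
  rw [blockRev_lt_blockRev_iff hqp, ne_eq, blockStart_eq_iff, not_and']
  have := le_blockEnd n J p
  exact ⟨fun h => not_le.1 (h (by omega)), fun h _ => not_le.2 h⟩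

lemma sign_blockRev (J : Set (Fin (n - 1))) :
    (blockRev J).sign = ∏ p : Fin n, (-1) ^ ((p : ℕ) - blockStart n J p) := by
  rw [Equiv.Perm.sign_eq_prod_prod_Iio]
  refine Finset.prod_congr rfl fun p _ => ?_
  have hs : blockStart n J p < n := (blockStart_le n J p).trans_lt p.2
  have hfilter : {q ∈ Finset.Iio p | ¬ q.1 < blockStart n J p} =
      Finset.Ico (⟨blockStart n J p, hs⟩ : Fin n) p := by
    ext q
    simp only [Finset.mem_filter, Finset.mem_Iio, Finset.mem_Ico, not_lt, Fin.le_def, and_comm]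
  calc ∏ q ∈ Finset.Iio p, (if blockRev J q < blockRev J p then (1 : ℤˣ) else -1)
      = ∏ q ∈ Finset.Iio p, (if q.1 < blockStart n J p then (1 : ℤˣ) else -1) :=
        Finset.prod_congr rfl fun q hq =>
          if_congr (blockRev_lt_blockRev_iff_lt_blockStart (Finset.mem_Iio.1 hq)) rfl rfl
    _ = (-1) ^ ((p : ℕ) - blockStart n J p) := by
        rw [Finset.prod_ite, Finset.prod_const_one, one_mul, Finset.prod_const, hfilter,
          Fin.card_Ico]

end Blocks

section Tails

variable {n : ℕ} {σ : Equiv.Perm (Fin n)} {m : ℕ}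

/-- The permutation `σ` maps the tail `{k | m ≤ k}` of `Fin n` into itself. For `0 < m` this says
that `σ` has a block decomposition with a cut between the positions `m - 1` and `m`. -/
def PreservesTail (σ : Equiv.Perm (Fin n)) (m : ℕ) : Prop :=
  ∀ k : Fin n, m ≤ k → m ≤ σ k

lemma PreservesTail.le_apply_iff (h : PreservesTail σ m) {k : Fin n} :
    m ≤ σ k ↔ m ≤ k := by
  refine ⟨fun hk => ?_, h k⟩
  simpa using Equiv.Perm.perm_symm_on_of_perm_on_finite (p := fun k : Fin n => m ≤ k) h hk

lemma preservesTail_zero : PreservesTail σ 0 :=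
  fun _ _ => Nat.zero_le _

lemma preservesTail_of_le (h : n ≤ m) : PreservesTail σ m :=
  fun k hk => absurd k.2 (h.trans hk).not_gt

lemma preservesTail_blockRev_iff {K : Set (Fin (n - 1))} (i : Fin (n - 1)) :
    PreservesTail (blockRev K) (i + 1) ↔ i ∉ K := by
  constructor
  · intro h hi
    let k : Fin n := ⟨i, by omega⟩
    let l : Fin n := ⟨i + 1, by omega⟩
    have hkl : blockStart n K k = blockStart n K l := by
      refine blockStart_eq_iff.2 ⟨?_, (Nat.le_succ _).trans (le_blockEnd n K l)⟩
      refine blockStart_le_of_forall_gapMem (Nat.le_succ _) fun c hc hcl => ?_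
      obtain rfl : c = i := by dsimp only [k, l] at hc hcl; omega
      exact ⟨i.2, hi⟩
    have hsum := blockRev_add_self_eq hkl
    have hk := h.le_apply_iff (k := k)
    have hl := h.le_apply_iff (k := l)
    dsimp only [k, l] at *
    omega
  · intro hi k hk
    have hstart : i + 1 ≤ blockStart n K k := by
      by_contra! hlt
      exact hi (gapMem_of_blockStart_le (Nat.le_of_lt_succ hlt) hk).2
    have := blockStart_le n K (blockRev K k)
    rw [blockStart_blockRev] at this
    omega

lemma apply_add_self_of_slow_descent (hσ : ∀ p q : Fin n, (q : ℕ) = p + 1 → (σ p : ℕ) ≤ σ q + 1)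
    {r : Fin n} (htail : PreservesTail σ (σ r + 1)) :
    ∀ q : Fin n, r ≤ q → q ≤ σ r → (σ q + q : ℕ) = r + σ r := by
  intro q
  induction q using WellFoundedLT.induction with
  | ind q ih =>
    intro hrq hqr
    obtain rfl | hlt := hrq.eq_or_lt
    · exact add_comm _ _
    have hprev := ih ⟨q - 1, by omega⟩ (by simp only [Fin.lt_def]; omega)
      (by simp only [Fin.le_def]; omega) (by simp only [Fin.le_def]; omega)
    have hdesc := hσ ⟨q - 1, by omega⟩ q (by simp only; omega)
    have hupper : ¬ σ r + 1 ≤ (σ q : ℕ) := by rw [htail.le_apply_iff]; omega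
    simp only at hprev
    by_contra hne
    let q' : Fin n := ⟨r + σ r - σ q, by omega⟩
    have hq' : (σ q' + q' : ℕ) = r + σ r := ih q' (by simp only [q', Fin.lt_def]; omega)
      (by simp only [q', Fin.le_def]; omega) (by simp only [q', Fin.le_def]; omega)
    have hσq' : σ q' = σ q := by
      ext
      simp only [q'] at hq' ⊢
      omega
    rw [σ.injective hσq'] at hq'
    exact hne hq'

lemma preservesTail_succ_iff_not_gapMem {K : Set (Fin (n - 1))}
    (hK : ∀ i : Fin (n - 1), PreservesTail σ (i + 1) ↔ i ∉ K) (c : ℕ) :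
    PreservesTail σ (c + 1) ↔ ¬ gapMem n K c := by
  obtain hlt | hle := lt_or_ge c (n - 1)
  · exact (hK ⟨c, hlt⟩).trans (not_congr ⟨fun h => ⟨hlt, h⟩, fun h => h.2⟩)
  · exact iff_of_true (preservesTail_of_le (by omega)) fun h => absurd h.1 hle.not_gt

theorem eq_blockRev_of_slow_descent {K : Set (Fin (n - 1))}
    (hσ : ∀ p q : Fin n, (q : ℕ) = p + 1 → (σ p : ℕ) ≤ σ q + 1)
    (hK : ∀ i : Fin (n - 1), PreservesTail σ (i + 1) ↔ i ∉ K) : σ = blockRev K := by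
  ext p
  have hsp := blockStart_le n K p
  have hpe := le_blockEnd n K p
  obtain ⟨r, hr⟩ := σ.surjective ⟨blockEnd n K p, blockEnd_lt n K p⟩
  replace hr : (σ r : ℕ) = blockEnd n K p := congrArg Fin.val hr
  have htail : PreservesTail σ (σ r + 1) :=
    (preservesTail_succ_iff_not_gapMem hK _).2 (hr ▸ not_gapMem_blockEnd)
  have hrun := apply_add_self_of_slow_descent hσ htail
  have hre : ¬ (σ r + 1 : ℕ) ≤ r := by rw [← htail.le_apply_iff]; omega
  have htail_start : PreservesTail σ (blockStart n K p) := by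
    obtain h | hpos := (blockStart n K p).eq_zero_or_pos
    · exact h ▸ preservesTail_zero
    · rw [← Nat.sub_add_cancel hpos, preservesTail_succ_iff_not_gapMem hK]
      exact not_gapMem_of_succ_eq_blockStart (Nat.sub_add_cancel hpos)
  have hsr : blockStart n K p ≤ r := htail_start.le_apply_iff.1 (by omega)
  have hr_start : (r : ℕ) = blockStart n K p := by
    by_contra hne
    have htail_r : PreservesTail σ (r - 1 + 1) := fun k hk => by
      obtain hle | hlt := le_or_gt k (σ r)
      · have := hrun k (by omega) hle
        omega
      · have := htail k hlt
        omega
    exact (preservesTail_succ_iff_not_gapMem hK _).1 htail_r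
      (gapMem_of_mem_block (p := p) (by omega) (by omega))
  have hp := hrun p (by omega) (by omega)
  have := blockRev_add_self (J := K) p
  omega

end Tails

section LongestRep

variable {n : ℕ} {R : Type*} [CommRing R]

lemma lowerRightMinor_permMatrix_ne_zero_iff [Nontrivial R] {σ : Equiv.Perm (Fin n)} {m : ℕ} :
    lowerRightMinor (σ.permMatrix R) m ≠ 0 ↔ PreservesTail σ m := by
  have hentry : ∀ i j, σ i ≠ j → σ.permMatrix R i j = 0 := fun i j hij => by
    simpa [Equiv.Perm.permMatrix, PEquiv.toMatrix_apply] using hij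
  constructor
  · intro hne k hk
    by_contra hlt
    exact hne (det_eq_zero_of_row_eq_zero ⟨k, hk⟩ fun j => hentry _ _ fun hj => hlt (hj ▸ j.2))
  · intro h
    have hdet : (σ.permMatrix R).det ≠ 0 := by
      rw [det_permutation]
      exact ((Equiv.Perm.sign σ).isUnit.map (Int.castRingHom R)).ne_zero
    rw [twoBlockTriangular_det' _ (fun k : Fin n => m ≤ (k : ℕ))] at hdet
    · exact left_ne_zero_of_mul hdet
    · exact fun i hi j hj => hentry i j fun hij => hj (hij ▸ h i hi)

/-- The representative `ẇ_J` of the longest element `blockRev J`, over any ring. -/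
def longestRep (R : Type*) [CommRing R] (J : Set (Fin (n - 1))) : Matrix (Fin n) (Fin n) R :=
  diagonal (fun p : Fin n => (-1) ^ ((p : ℕ) - blockStart n J p)) * (blockRev J).permMatrix R

variable {J : Set (Fin (n - 1))} {M : Matrix (Fin n) (Fin n) R} {p q : Fin n}

lemma longestRep_apply (p q : Fin n) :
    longestRep R J p q = if (p + q : ℕ) = blockStart n J p + blockEnd n J p
      then (-1) ^ ((p : ℕ) - blockStart n J p) else 0 := by
  have hiff : blockRev J p = q ↔ (p + q : ℕ) = blockStart n J p + blockEnd n J p := by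
    rw [← blockRev_add_self, Fin.ext_iff]
    omega
  simp [longestRep, diagonal_mul, Equiv.Perm.permMatrix, PEquiv.toMatrix_apply, ← hiff, eq_comm]

@[simp]
lemma det_longestRep : (longestRep R J).det = 1 := by
  rw [longestRep, det_mul, det_diagonal, det_permutation, sign_blockRev]
  push_cast
  rw [← Finset.prod_mul_distrib]
  exact Finset.prod_eq_one fun p _ => by rw [← mul_pow, neg_one_mul, neg_neg, one_pow]

lemma isUnit_det_longestRep : IsUnit (longestRep R J).det := by
  rw [det_longestRep]
  exact isUnit_one

lemma longestRep_mul_apply (M : Matrix (Fin n) (Fin n) R) (p q : Fin n) :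
    (longestRep R J * M) p q = (-1) ^ ((p : ℕ) - blockStart n J p) * M (blockRev J p) q := by
  rw [longestRep, Matrix.mul_assoc, diagonal_mul, PEquiv.toMatrix_toPEquiv_mul]
  rfl

lemma mul_longestRep_apply (M : Matrix (Fin n) (Fin n) R) (p q : Fin n) :
    (M * longestRep R J) p q =
      M p (blockRev J q) * (-1) ^ ((blockRev J q : ℕ) - blockStart n J q) := by
  rw [longestRep, ← Matrix.mul_assoc, PEquiv.mul_toMatrix_toPEquiv, submatrix_apply, mul_diagonal,
    ← blockStart_blockRev q]
  rfl

lemma diagonal_mul_longestRep (d : Fin n → R) :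
    diagonal d * longestRep R J = longestRep R J * diagonal (d ∘ blockRev J) := by
  ext p q
  rw [mul_longestRep_apply, longestRep_mul_apply]
  obtain rfl | hne := eq_or_ne p (blockRev J q)
  · simp [mul_comm]
  · have hne' : blockRev J p ≠ q := fun h => hne (by rw [← h, blockRev_blockRev])
    rw [diagonal_apply_ne _ hne, diagonal_apply_ne _ hne', zero_mul, mul_zero]

lemma exists_permMatrix_blockRev_eq :
    ∃ d : Fin n → R, (blockRev J).permMatrix R = longestRep R J * diagonal d := by
  let s : Fin n → R := fun p => (-1) ^ ((p : ℕ) - blockStart n J p)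
  have hs : diagonal s * diagonal s = 1 := by
    rw [diagonal_mul_diagonal, ← diagonal_one]
    exact congrArg diagonal (funext fun p => by simp [s, ← mul_pow])
  refine ⟨s ∘ blockRev J, ?_⟩
  rw [← diagonal_mul_longestRep, longestRep, ← Matrix.mul_assoc, hs, Matrix.one_mul]

lemma longestRep_conj_apply_eq_zero_iff :
    ((longestRep R J)⁻¹ * M * longestRep R J) p q = 0 ↔ M (blockRev J p) (blockRev J q) = 0 := by
  have h : longestRep R J * ((longestRep R J)⁻¹ * M * longestRep R J) = M * longestRep R J := by
    rw [Matrix.mul_assoc, mul_nonsing_inv_cancel_left _ _ isUnit_det_longestRep]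
  generalize (longestRep R J)⁻¹ * M * longestRep R J = X at h ⊢
  have hentry := congrFun₂ h (blockRev J p) q
  rw [longestRep_mul_apply, mul_longestRep_apply, blockRev_blockRev] at hentry
  rw [← neg_one_pow_mul_eq_zero_iff (n := (blockRev J p : ℕ) - blockStart n J (blockRev J p)),
    hentry, mul_neg_one_pow_eq_zero_iff]

lemma isLowerHessenberg_longestRep_conj_iff (hM : M.IsLowerTriangular) :
    IsLowerHessenberg ((longestRep R J)⁻¹ * M * longestRep R J) ↔
      ∀ p q : Fin n, blockStart n J p = blockStart n J q → (q : ℕ) + 1 < p → M p q = 0 := by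
  refine ⟨fun h p q hpq hlt => ?_, fun h p q hlt => longestRep_conj_apply_eq_zero_iff.2 ?_⟩
  · have := blockRev_add_self_eq hpq
    simpa [longestRep_conj_apply_eq_zero_iff] using h (blockRev J p) (blockRev J q) (by omega)
  · by_cases hpq : blockStart n J p = blockStart n J q
    · have := blockRev_add_self_eq hpq
      exact h _ _ (by simpa using hpq) (by omega)
    · exact hM ((blockRev_lt_blockRev_iff (show p < q by omega)).2 hpq)

lemma isLowerTriangular_longestRep_conj (hM : M.IsLowerTriangular)
    (hdiag : (blockPart (blockStart n J) M).IsDiag) :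
    ((longestRep R J)⁻¹ * M * longestRep R J).IsLowerTriangular := by
  intro p q (hlt : p < q)
  rw [longestRep_conj_apply_eq_zero_iff]
  by_cases hpq : blockStart n J p = blockStart n J q
  · rw [← hdiag ((blockRev J).injective.ne hlt.ne), blockPart_apply_of_eq]
    simpa using hpq
  · exact hM ((blockRev_lt_blockRev_iff hlt).2 hpq)

lemma lowerRightMinor_longestRep_eq_zero_iff [IsDomain R] {i : Fin (n - 1)} :
    lowerRightMinor (longestRep R J) (i + 1) = 0 ↔ i ∈ J := by
  rw [longestRep, lowerRightMinor_upper_mul_eq_zero_iff (blockTriangular_diagonal _),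
    ← not_iff_not, ← ne_eq, lowerRightMinor_permMatrix_ne_zero_iff, preservesTail_blockRev_iff]
  rw [det_diagonal]
  exact Finset.prod_ne_zero_iff.2 fun p _ => pow_ne_zero _ (neg_ne_zero.2 one_ne_zero)

end LongestRep

/-! ### Toeplitz blocks and the centralizer of `f` -/

section Subdiagonal

variable {n : ℕ} {R : Type*} [CommRing R] {S S' x : Matrix (Fin n) (Fin n) R}

/-- Matrices supported on the first subdiagonal, such as `f` and its block diagonal part. -/
def IsSubdiagonal (S : Matrix (Fin n) (Fin n) R) : Prop :=
  ∀ p q : Fin n, (p : ℕ) ≠ q + 1 → S p q = 0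

lemma isSubdiagonal_lowerShift : IsSubdiagonal (lowerShift n R) :=
  fun _ _ h => if_neg h

lemma IsSubdiagonal.blockPart {α : Type*} (hS : IsSubdiagonal S) (b : Fin n → α) :
    IsSubdiagonal (blockPart b S) := fun p q h => by
  by_cases hb : b p = b q
  · rw [blockPart_apply_of_eq hb, hS p q h]
  · rw [blockPart_apply_of_ne hb]

lemma isSubdiagonal_blockPart {α : Type*} {b : Fin n → α} (hx : x.IsLowerTriangular)
    (hdiag : ∀ p, x p p = 0) (h : ∀ p q : Fin n, b p = b q → (q : ℕ) + 1 < p → x p q = 0) :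
    IsSubdiagonal (blockPart b x) := by
  intro p q hne
  by_cases hb : b p = b q
  · rw [blockPart_apply_of_eq hb]
    obtain hlt | rfl | hgt := lt_trichotomy p q
    · exact hx hlt
    · exact hdiag p
    · exact h p q hb (by omega)
  · exact blockPart_apply_of_ne hb x

lemma IsSubdiagonal.isLowerTriangular (hS : IsSubdiagonal S) : S.IsLowerTriangular :=
  fun p q (h : p < q) => hS p q (by omega)

lemma IsSubdiagonal.mul_apply (hS : IsSubdiagonal S) {p p' q : Fin n} (hp : (p : ℕ) = p' + 1) :
    (S * x) p q = S p p' * x p' q := by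
  rw [Matrix.mul_apply]
  refine Finset.sum_eq_single p' (fun k _ hk => ?_) fun h => absurd (Finset.mem_univ p') h
  rw [hS p k (by omega), zero_mul]

lemma IsSubdiagonal.apply_mul (hS : IsSubdiagonal S) {p q q' : Fin n} (hq : (q' : ℕ) = q + 1) :
    (x * S) p q = x p q' * S q' q := by
  rw [Matrix.mul_apply]
  refine Finset.sum_eq_single q' (fun k _ hk => ?_) fun h => absurd (Finset.mem_univ q') h
  rw [hS k q (by omega), mul_zero]

lemma subdiagonal_mul_eq_mul_subdiagonal_iff (hS : IsSubdiagonal S) (hS' : IsSubdiagonal S')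
    (hx : x.IsLowerTriangular) :
    S * x = x * S' ↔ ∀ p p' q q' : Fin n, (p : ℕ) = p' + 1 → (q' : ℕ) = q + 1 → q ≤ p' →
      S p p' * x p' q = x p q' * S' q' q := by
  constructor
  · intro h p p' q q' hp hq _
    rw [← hS.mul_apply hp, ← hS'.apply_mul hq, h]
  · intro h
    ext p q
    obtain hlt | rfl | hgt := lt_trichotomy p q
    · rw [hS.isLowerTriangular.mul hx hlt, hx.mul hS'.isLowerTriangular hlt]
    · rw [mul_apply_self_of_isLowerTriangular hS.isLowerTriangular hx,
        mul_apply_self_of_isLowerTriangular hx hS'.isLowerTriangular, hS p p (by omega),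
        hS' p p (by omega), zero_mul, mul_zero]
    · have hp : (p : ℕ) = (⟨p - 1, by omega⟩ : Fin n) + 1 := by dsimp only; omega
      have hq : ((⟨q + 1, by omega⟩ : Fin n) : ℕ) = q + 1 := rfl
      rw [hS.mul_apply hp, hS'.apply_mul hq]
      exact h _ _ _ _ hp hq (by simp only [Fin.le_def]; omega)

lemma subdiagonal_eq_of_mul_eq_mul (hS : IsSubdiagonal S) (hS' : IsSubdiagonal S')
    (hx : x.IsLowerTriangular) (hdiag : ∀ p, x p p = 1) (h : S * x = x * S') : S = S' := by
  ext p q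
  by_cases hpq : (p : ℕ) = q + 1
  · have := (subdiagonal_mul_eq_mul_subdiagonal_iff hS hS' hx).1 h p q q p hpq hpq le_rfl
    rwa [hdiag, hdiag, mul_one, one_mul] at this
  · rw [hS p q hpq, hS' p q hpq]

end Subdiagonal

section Toeplitz

variable {n : ℕ} {R : Type*} [CommRing R] {J : Set (Fin (n - 1))} {x : Matrix (Fin n) (Fin n) R}

/-- `J`-Toeplitz matrices over any ring; `c a k` is the entry on the `k`-th subdiagonal of the
block starting at `a`. -/
def IsBlockToeplitz (J : Set (Fin (n - 1))) (x : Matrix (Fin n) (Fin n) R) : Prop :=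
  ∃ c : ℕ → ℕ → R, (∀ a, c a 0 = 1) ∧
    ∀ p q : Fin n, x p q =
      if blockStart n J p = blockStart n J q ∧ (q : ℕ) ≤ (p : ℕ)
      then c (blockStart n J p) ((p : ℕ) - (q : ℕ)) else 0

lemma IsBlockToeplitz.isLowerTriangular (hx : IsBlockToeplitz J x) : x.IsLowerTriangular := by
  obtain ⟨c, -, hx⟩ := hx
  intro p q (hpq : p < q)
  rw [hx, if_neg fun h => absurd h.2 (by omega)]

lemma IsBlockToeplitz.apply_self (hx : IsBlockToeplitz J x) (p : Fin n) : x p p = 1 := by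
  obtain ⟨c, hc, hx⟩ := hx
  rw [hx, if_pos ⟨rfl, le_rfl⟩, Nat.sub_self, hc]

lemma IsBlockToeplitz.det_eq_one (hx : IsBlockToeplitz J x) : x.det = 1 :=
  det_eq_one_of_isLowerTriangular hx.isLowerTriangular hx.apply_self

lemma IsBlockToeplitz.apply_eq_zero (hx : IsBlockToeplitz J x) {p q : Fin n}
    (hpq : blockStart n J p ≠ blockStart n J q) : x p q = 0 := by
  obtain ⟨c, -, hx⟩ := hx
  rw [hx, if_neg fun h => hpq h.1]

lemma IsBlockToeplitz.blockPart_eq (hx : IsBlockToeplitz J x) :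
    blockPart (blockStart n J) x = x := by
  ext p q
  by_cases hpq : blockStart n J p = blockStart n J q
  · exact blockPart_apply_of_eq hpq x
  · rw [blockPart_apply_of_ne hpq, hx.apply_eq_zero hpq]

lemma IsBlockToeplitz.apply_eq_of_sub_eq (hx : IsBlockToeplitz J x) {p q p' q' : Fin n}
    (hpq : blockStart n J p = blockStart n J q) (hp : blockStart n J p' = blockStart n J p)
    (hq : blockStart n J q' = blockStart n J p) (hle : q ≤ p) (hle' : q' ≤ p')
    (hsub : (p - q : ℕ) = p' - q') : x p q = x p' q' := by
  obtain ⟨c, -, hx⟩ := hx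
  rw [hx, hx, if_pos ⟨hpq, hle⟩, if_pos ⟨hp.trans hq.symm, hle'⟩, hp, hsub]

variable (n J R) in
/-- The block diagonal part of `f`, the sum of the regular nilpotents of the blocks. -/
def blockShift : Matrix (Fin n) (Fin n) R :=
  blockPart (blockStart n J) (lowerShift n R)

lemma isSubdiagonal_blockShift : IsSubdiagonal (blockShift n R J) :=
  isSubdiagonal_lowerShift.blockPart _

lemma blockShift_apply_of_eq {p q : Fin n} (hpq : (p : ℕ) = q + 1)
    (hblock : blockStart n J p = blockStart n J q) : blockShift n R J p q = 1 :=
  (blockPart_apply_of_eq hblock _).trans (lowerShift_apply_of_eq_succ hpq)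

lemma blockShift_apply_of_ne {p q : Fin n} (hblock : blockStart n J p ≠ blockStart n J q) :
    blockShift n R J p q = 0 :=
  blockPart_apply_of_ne hblock _

lemma IsBlockToeplitz.commute_blockShift (hx : IsBlockToeplitz J x) :
    Commute (blockShift n R J) x := by
  have hS := isSubdiagonal_blockShift (R := R) (J := J)
  refine (subdiagonal_mul_eq_mul_subdiagonal_iff hS hS hx.isLowerTriangular).2 ?_
  intro p p' q q' hp hq hqp
  by_cases hblock : blockStart n J q = blockStart n J p
  · have hp' := blockStart_eq_of_mem_Icc hblock hqp (show p' ≤ p by omega)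
    have hq' := blockStart_eq_of_mem_Icc hblock (show q ≤ q' by omega) (by omega)
    rw [blockShift_apply_of_eq hp (hblock.symm.trans hp'.symm), blockShift_apply_of_eq hq hq',
      one_mul, mul_one]
    exact hx.apply_eq_of_sub_eq hp' (hblock.symm.trans hp'.symm) (hq'.trans hp'.symm) hqp
      (by omega) (by omega)
  · have hleft : blockShift n R J p p' * x p' q = 0 := by
      by_cases h : blockStart n J p = blockStart n J p'
      · rw [hx.apply_eq_zero fun h' => hblock (h'.symm.trans h.symm), mul_zero]
      · rw [blockShift_apply_of_ne h, zero_mul]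
    have hright : x p q' * blockShift n R J q' q = 0 := by
      by_cases h : blockStart n J q' = blockStart n J q
      · rw [hx.apply_eq_zero fun h' => hblock (h.symm.trans h'.symm), zero_mul]
      · rw [blockShift_apply_of_ne h, mul_zero]
    rw [hleft, hright]

lemma apply_add_eq_of_commute_blockShift (hx : x.IsLowerTriangular)
    (hcomm : Commute (blockShift n R J) x) (k : ℕ) :
    ∀ p p' q q' : Fin n, (p : ℕ) = p' + k → (q' : ℕ) = q + k → q ≤ p' →
      blockStart n J q = blockStart n J p → x p q' = x p' q := by
  have hS := isSubdiagonal_blockShift (R := R) (J := J)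
  induction k with
  | zero =>
    intro p p' q q' hp hq _ _
    rw [Fin.ext hp, Fin.ext hq]
  | succ k ih =>
    intro p p' q q' hp hq hqp hblock
    let r : Fin n := ⟨p' + k, by omega⟩
    let r' : Fin n := ⟨q + k, by omega⟩
    have hmid := fun j => blockStart_eq_of_mem_Icc (r := j) hblock
    have hr := hmid r (by simp only [r, Fin.le_def]; omega) (by simp only [r, Fin.le_def]; omega)
    have hr' := hmid r' (by simp only [r', Fin.le_def]; omega)
      (by simp only [r', Fin.le_def]; omega)
    have hstep := (subdiagonal_mul_eq_mul_subdiagonal_iff hS hS hx).1 hcomm p r r' q' hp hq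
      (by simp only [r, r', Fin.le_def]; omega)
    rw [blockShift_apply_of_eq hp (hblock.symm.trans hr.symm), blockShift_apply_of_eq hq
      ((hmid q' (by omega) (by omega)).trans hr'.symm), one_mul, mul_one] at hstep
    rw [← hstep]
    exact ih r p' q r' rfl rfl hqp hr.symm

lemma isBlockToeplitz_of_commute_blockShift (hx : x.IsLowerTriangular) (hdiag : ∀ p, x p p = 1)
    (hblock : blockPart (blockStart n J) x = x) (hcomm : Commute (blockShift n R J) x) :
    IsBlockToeplitz J x := by
  refine ⟨fun a k => if h : a + k < n then x ⟨a + k, h⟩ ⟨a, by omega⟩ else 1, fun a => ?_,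
    fun p q => ?_⟩
  · dsimp only
    split_ifs
    · exact hdiag _
    · rfl
  · split_ifs with h
    · obtain ⟨hpq, hle⟩ := h
      have hsq := blockStart_le n J q
      have hn : blockStart n J p + (p - q : ℕ) < n := by omega
      dsimp only
      rw [dif_pos hn]
      exact apply_add_eq_of_commute_blockShift hx hcomm (q - blockStart n J p) p _ _ q
        (by dsimp only; omega) (by dsimp only; omega) (Nat.le_add_right _ _)
        (blockStart_blockStart p)
    · by_cases hpq : blockStart n J p = blockStart n J q
      · exact hx (show p < q from not_le.1 fun hle => h ⟨hpq, hle⟩)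
      · rw [← hblock, blockPart_apply_of_ne hpq]

end Toeplitz

section Centralizer

variable {n : ℕ} {R : Type*} [CommRing R] {J : Set (Fin (n - 1))} {B x : Matrix (Fin n) (Fin n) R}

lemma IsBlockToeplitz.blockPart_conj_lowerShift (hx : IsBlockToeplitz J x) :
    blockPart (blockStart n J) (x⁻¹ * lowerShift n R * x) = blockShift n R J := by
  have hmono := blockStart_mono (n := n) (J := J)
  have hlow := hx.isLowerTriangular
  have hinv : x⁻¹.IsLowerTriangular := blockTriangular_inv hlow
  have hf := (isSubdiagonal_lowerShift (n := n) (R := R)).isLowerTriangular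
  have hunit : IsUnit x.det := hx.det_eq_one ▸ isUnit_one
  rw [Matrix.mul_assoc, blockPart_mul_of_monotone hmono hinv (hf.mul hlow),
    blockPart_mul_of_monotone hmono hf hlow, ← blockShift, hx.blockPart_eq,
    hx.commute_blockShift.eq, ← Matrix.mul_assoc]
  nth_rw 2 [← hx.blockPart_eq]
  rw [← blockPart_mul_of_monotone hmono hinv hlow, nonsing_inv_mul x hunit, blockPart_one,
    Matrix.one_mul]

lemma IsBlockToeplitz.isLowerHessenberg_conj_lowerShift (hx : IsBlockToeplitz J x) :
    IsLowerHessenberg ((x * longestRep R J)⁻¹ * lowerShift n R * (x * longestRep R J)) := by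
  have hlow := hx.isLowerTriangular
  have hinv : x⁻¹.IsLowerTriangular := blockTriangular_inv hlow
  have hf := (isSubdiagonal_lowerShift (n := n) (R := R)).isLowerTriangular
  have hconj : (x * longestRep R J)⁻¹ * lowerShift n R * (x * longestRep R J) =
      (longestRep R J)⁻¹ * (x⁻¹ * lowerShift n R * x) * longestRep R J := by
    simp only [Matrix.mul_inv_rev, Matrix.mul_assoc]
  rw [hconj, isLowerHessenberg_longestRep_conj_iff ((hinv.mul hf).mul hlow)]
  intro p q hpq hlt
  rw [← blockPart_apply_of_eq hpq (x⁻¹ * lowerShift n R * x), hx.blockPart_conj_lowerShift]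
  exact isSubdiagonal_blockShift p q (by omega)

lemma isBlockToeplitz_blockPart (hB : B.IsLowerTriangular) (hdiag : ∀ p, B p p = 1)
    (h : ∀ p q : Fin n, blockStart n J p = blockStart n J q → (q : ℕ) + 1 < p →
      (B⁻¹ * lowerShift n R * B) p q = 0) :
    IsBlockToeplitz J (blockPart (blockStart n J) B) := by
  have hmono := blockStart_mono (n := n) (J := J)
  have hf := isSubdiagonal_lowerShift (n := n) (R := R)
  have hunit : IsUnit B.det := by
    rw [det_eq_one_of_isLowerTriangular hB hdiag]
    exact isUnit_one
  have hN : (B⁻¹ * lowerShift n R * B).IsLowerTriangular :=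
    (BlockTriangular.mul (blockTriangular_inv hB) hf.isLowerTriangular).mul hB
  have hBN : lowerShift n R * B = B * (B⁻¹ * lowerShift n R * B) := by
    rw [Matrix.mul_assoc, mul_nonsing_inv_cancel_left _ _ hunit]
  generalize B⁻¹ * lowerShift n R * B = N at h hN hBN
  have hNdiag (p : Fin n) : N p p = 0 := by
    have hpp := congrFun₂ hBN p p
    rwa [mul_apply_self_of_isLowerTriangular hf.isLowerTriangular hB,
      mul_apply_self_of_isLowerTriangular hB hN, hdiag, hf p p (by omega), zero_mul, one_mul,
      eq_comm] at hpp
  have hx := isLowerTriangular_blockPart hB (blockStart n J)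
  have hxdiag (p : Fin n) : blockPart (blockStart n J) B p p = 1 :=
    (blockPart_apply_of_eq rfl B).trans (hdiag p)
  have hcomm : blockShift n R J * blockPart (blockStart n J) B =
      blockPart (blockStart n J) B * blockPart (blockStart n J) N := by
    rw [blockShift, ← blockPart_mul_of_monotone hmono hf.isLowerTriangular hB, hBN,
      blockPart_mul_of_monotone hmono hB hN]
  rw [← subdiagonal_eq_of_mul_eq_mul isSubdiagonal_blockShift
    (isSubdiagonal_blockPart hN hNdiag h) hx hxdiag hcomm] at hcomm
  exact isBlockToeplitz_of_commute_blockShift hx hxdiag (blockPart_blockPart _ B) hcomm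

end Centralizer

/-! ### The double cosets -/

section LowerCell

variable {n : ℕ} {F : Type*} [Field F] {J : Set (Fin (n - 1))} {g : Matrix (Fin n) (Fin n) F}

variable (F J) in
/-- The double coset `B⁻ ẇ_J B⁻` in `SL_n`. -/
def lowerCell : Set (Matrix (Fin n) (Fin n) F) :=
  {g | ∃ b₁ b₂ : Matrix (Fin n) (Fin n) F, b₁.det = 1 ∧ b₂.det = 1 ∧ b₁.IsLowerTriangular ∧
    b₂.IsLowerTriangular ∧ g = b₁ * longestRep F J * b₂}

lemma exists_unitriangular_of_mem_lowerCell (hg : g ∈ lowerCell F J) :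
    ∃ B b : Matrix (Fin n) (Fin n) F, B.IsLowerTriangular ∧ (∀ i, B i i = 1) ∧
      b.IsLowerTriangular ∧ b.det = 1 ∧ g = B * longestRep F J * b := by
  obtain ⟨b₁, b₂, hdet₁, hdet₂, hb₁, hb₂, rfl⟩ := hg
  have hne (i : Fin n) : b₁ i i ≠ 0 :=
    apply_self_ne_zero_of_isLowerTriangular hb₁ (by simp [hdet₁]) i
  have hdiag : (diagonal fun i => (b₁ i i)⁻¹) * diagonal b₁.diag = 1 := by
    rw [diagonal_mul_diagonal, ← diagonal_one]
    exact congrArg diagonal (funext fun i => inv_mul_cancel₀ (hne i))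
  let B := b₁ * diagonal fun i => (b₁ i i)⁻¹
  have hB : B.IsLowerTriangular := hb₁.mul (blockTriangular_diagonal _)
  have hBdiag (i : Fin n) : B i i = 1 := by
    simp only [B, mul_diagonal, mul_inv_cancel₀ (hne i)]
  have heq : b₁ * longestRep F J * b₂ =
      B * longestRep F J * (diagonal (b₁.diag ∘ blockRev J) * b₂) := calc
    b₁ * longestRep F J * b₂
      = b₁ * ((diagonal fun i => (b₁ i i)⁻¹) * diagonal b₁.diag) * longestRep F J * b₂ := by
        rw [hdiag, Matrix.mul_one]
    _ = B * (diagonal b₁.diag * longestRep F J) * b₂ := by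
        simp only [B, Matrix.mul_assoc]
    _ = B * longestRep F J * (diagonal (b₁.diag ∘ blockRev J) * b₂) := by
        rw [diagonal_mul_longestRep]
        simp only [Matrix.mul_assoc]
  refine ⟨B, _, hB, hBdiag, (blockTriangular_diagonal _).mul hb₂, ?_, heq⟩
  have hdet := congrArg det heq
  rwa [det_mul, det_mul, det_mul (B * _), det_mul B, det_longestRep, hdet₁, hdet₂,
    det_eq_one_of_isLowerTriangular hB hBdiag, one_mul, one_mul, one_mul, eq_comm] at hdet

lemma exists_mul_longestRep_eq_blockPart_mul {R : Type*} [CommRing R]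
    {B : Matrix (Fin n) (Fin n) R} (hB : B.IsLowerTriangular) (hdiag : ∀ i, B i i = 1) :
    ∃ c : Matrix (Fin n) (Fin n) R, c.IsLowerTriangular ∧ c.det = 1 ∧
      B * longestRep R J = blockPart (blockStart n J) B * longestRep R J * c := by
  have hx := isLowerTriangular_blockPart hB (blockStart n J)
  have hxdet : (blockPart (blockStart n J) B).det = 1 :=
    det_eq_one_of_isLowerTriangular hx fun i => (blockPart_apply_of_eq rfl B).trans (hdiag i)
  have hxunit : IsUnit (blockPart (blockStart n J) B).det := hxdet ▸ isUnit_one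
  have hxinv : (blockPart (blockStart n J) B)⁻¹.IsLowerTriangular := blockTriangular_inv hx
  have hone := blockPart_inv_blockPart_mul blockStart_mono hB hxunit
  generalize blockPart (blockStart n J) B = x at *
  refine ⟨(longestRep R J)⁻¹ * (x⁻¹ * B) * longestRep R J,
    isLowerTriangular_longestRep_conj (hxinv.mul hB) (hone ▸ isDiag_one), ?_, ?_⟩
  · rw [det_conj' ((isUnit_iff_isUnit_det _).2 isUnit_det_longestRep), det_mul, det_nonsing_inv,
      hxdet, det_eq_one_of_isLowerTriangular hB hdiag, Ring.inverse_one, one_mul]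
  · rw [Matrix.mul_assoc x, ← Matrix.mul_assoc (longestRep R J),
      mul_nonsing_inv_cancel_left _ _ isUnit_det_longestRep, ← Matrix.mul_assoc,
      mul_nonsing_inv_cancel_left _ _ hxunit]

lemma isLowerHessenberg_conj_and_mem_lowerCell_iff :
    IsLowerHessenberg (g⁻¹ * lowerShift n F * g) ∧ g ∈ lowerCell F J ↔
      ∃ x b : Matrix (Fin n) (Fin n) F, IsBlockToeplitz J x ∧ b.det = 1 ∧ b.IsLowerTriangular ∧
        g = x * longestRep F J * b := by
  constructor
  · rintro ⟨hH, hg⟩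
    obtain ⟨B, b, hB, hdiag, hb, hbdet, rfl⟩ := exists_unitriangular_of_mem_lowerCell hg
    have hunit : IsUnit b.det := hbdet ▸ isUnit_one
    have hBH := hH.conj_mul_lower (blockTriangular_inv hb)
    rw [mul_nonsing_inv_cancel_right _ _ hunit, Matrix.mul_inv_rev] at hBH
    have hf := (isSubdiagonal_lowerShift (n := n) (R := F)).isLowerTriangular
    have hlow : (B⁻¹ * lowerShift n F * B).IsLowerTriangular :=
      (BlockTriangular.mul (blockTriangular_inv hB) hf).mul hB
    have hx := isBlockToeplitz_blockPart hB hdiag <|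
      (isLowerHessenberg_longestRep_conj_iff hlow).1 <| by
        simpa only [Matrix.mul_assoc] using hBH
    obtain ⟨c, hc, hcdet, hcB⟩ := exists_mul_longestRep_eq_blockPart_mul (J := J) hB hdiag
    exact ⟨_, c * b, hx, by rw [det_mul, hcdet, hbdet, one_mul], hc.mul hb,
      by rw [hcB, Matrix.mul_assoc _ c]⟩
  · rintro ⟨x, b, hx, hdet, hb, rfl⟩
    exact ⟨hx.isLowerHessenberg_conj_lowerShift.conj_mul_lower hb, x, b, hx.det_eq_one, hdet,
      hx.isLowerTriangular, hb, rfl⟩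

end LowerCell

section UpperCell

variable {n : ℕ} {F : Type*} [Field F] {K : Set (Fin (n - 1))} {g u l : Matrix (Fin n) (Fin n) F}
  {σ : Equiv.Perm (Fin n)}

variable (F K) in
/-- The double coset `B⁺ ẇ_K B⁻` in `SL_n`. -/
def upperCell : Set (Matrix (Fin n) (Fin n) F) :=
  {g | ∃ b₁ b₂ : Matrix (Fin n) (Fin n) F, b₁.det = 1 ∧ b₂.det = 1 ∧ b₁.IsUpperTriangular ∧
    b₂.IsLowerTriangular ∧ g = b₁ * longestRep F K * b₂}

lemma lowerRightMinor_eq_zero_iff_of_mem_upperCell (hg : g ∈ upperCell F K) (i : Fin (n - 1)) :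
    lowerRightMinor g (i + 1) = 0 ↔ i ∈ K := by
  obtain ⟨b₁, b₂, hdet₁, hdet₂, hb₁, hb₂, rfl⟩ := hg
  rw [lowerRightMinor_mul_lower_eq_zero_iff _ hb₂ (by simp [hdet₂]),
    lowerRightMinor_upper_mul_eq_zero_iff hb₁ (by simp [hdet₁]),
    lowerRightMinor_longestRep_eq_zero_iff]

lemma perm_apply_le_succ_of_isLowerHessenberg_conj (hu : u.IsUpperTriangular) (hudet : u.det = 1)
    (hl : l.IsLowerTriangular) (hldet : IsUnit l.det) (hgdet : IsUnit g.det)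
    (hug : u * g = σ.permMatrix F * l) (hH : IsLowerHessenberg (g⁻¹ * lowerShift n F * g))
    {p q : Fin n} (hpq : (q : ℕ) = p + 1) : (σ p : ℕ) ≤ σ q + 1 := by
  have hconj : u * lowerShift n F * u⁻¹ * σ.permMatrix F =
      σ.permMatrix F * (l * (g⁻¹ * lowerShift n F * g) * l⁻¹) := by
    calc u * lowerShift n F * u⁻¹ * σ.permMatrix F
        = u * lowerShift n F * (u⁻¹ * (σ.permMatrix F * l)) * l⁻¹ := by
          simp only [Matrix.mul_assoc, mul_nonsing_inv _ hldet, Matrix.mul_one]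
      _ = u * g * (g⁻¹ * lowerShift n F * g) * l⁻¹ := by
          rw [← hug, nonsing_inv_mul_cancel_left _ _ (hudet ▸ isUnit_one)]
          simp only [Matrix.mul_assoc, mul_nonsing_inv_cancel_left _ _ hgdet]
      _ = σ.permMatrix F * (l * (g⁻¹ * lowerShift n F * g) * l⁻¹) := by
          rw [hug]
          simp only [Matrix.mul_assoc]
  have hM := (IsLowerHessenberg.lower_mul hl hH).mul_lower (blockTriangular_inv hl)
  have hne := upper_mul_lowerShift_mul_upper_apply_ne_zero hu (blockTriangular_inv hu)
    (by simp [hudet]) (by simp [det_nonsing_inv, hudet]) hpq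
  have hentry := congrFun₂ hconj q (σ p)
  rw [PEquiv.toMatrix_toPEquiv_mul, PEquiv.mul_toMatrix_toPEquiv, submatrix_apply, submatrix_apply,
    id, id, Equiv.symm_apply_apply] at hentry
  by_contra hlt
  exact hne (hentry.trans (hM _ _ (not_le.1 hlt)))

lemma mem_upperCell_of_mul_eq_permMatrix_mul (hu : u.IsUpperTriangular) (hudet : u.det = 1)
    (hl : l.IsLowerTriangular) (hgdet : g.det = 1)
    (hug : u * g = (blockRev K).permMatrix F * l) : g ∈ upperCell F K := by
  have hunit : IsUnit u.det := hudet ▸ isUnit_one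
  obtain ⟨d, hd⟩ := exists_permMatrix_blockRev_eq (R := F) (J := K)
  have hg : g = u⁻¹ * longestRep F K * (diagonal d * l) := by
    rw [← nonsing_inv_mul_cancel_left u g hunit, hug, hd]
    simp only [Matrix.mul_assoc]
  have huinv : u⁻¹.det = 1 := by rw [det_nonsing_inv, hudet, Ring.inverse_one]
  refine ⟨u⁻¹, diagonal d * l, huinv, ?_, blockTriangular_inv hu,
    (blockTriangular_diagonal _).mul hl, hg⟩
  rw [← hgdet, hg, det_mul (u⁻¹ * _), det_mul u⁻¹, huinv, det_longestRep, one_mul, one_mul]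

lemma mem_upperCell_iff (hgdet : g.det = 1)
    (hH : IsLowerHessenberg (g⁻¹ * lowerShift n F * g)) :
    g ∈ upperCell F K ↔ ∀ i : Fin (n - 1), lowerRightMinor g (i + 1) = 0 ↔ i ∈ K := by
  refine ⟨fun hg i => lowerRightMinor_eq_zero_iff_of_mem_upperCell hg i, fun hK => ?_⟩
  obtain ⟨u, l, σ, hu, hdiag, hl, hug⟩ :=
    exists_upper_mul_eq_permMatrix_mul_lower (g := g) (hgdet ▸ one_ne_zero)
  have hudet : u.det = 1 := by
    rw [det_of_isUpperTriangular hu, Finset.prod_eq_one fun i _ => hdiag i]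
  have hldet : l.det ≠ 0 := by
    have hdet := congrArg det hug
    rw [det_mul, det_mul, hudet, hgdet, mul_one] at hdet
    exact right_ne_zero_of_mul (hdet ▸ one_ne_zero)
  have htail (i : Fin (n - 1)) : PreservesTail σ (i + 1) ↔ i ∉ K := by
    rw [← lowerRightMinor_permMatrix_ne_zero_iff (R := F), ← hK i, ne_eq,
      ← lowerRightMinor_upper_mul_eq_zero_iff hu (by simp [hudet]) g, hug,
      lowerRightMinor_mul_lower_eq_zero_iff _ hl hldet]
  have hdescent (p q : Fin n) (hpq : (q : ℕ) = p + 1) : (σ p : ℕ) ≤ σ q + 1 :=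
    perm_apply_le_succ_of_isLowerHessenberg_conj hu hudet hl hldet.isUnit
      (hgdet ▸ isUnit_one) hug hH hpq
  rw [eq_blockRev_of_slow_descent hdescent htail] at hug
  exact mem_upperCell_of_mul_eq_permMatrix_mul hu hudet hl hgdet hug

end UpperCell

theorem richardson_stratum_description_general {n : ℕ} {F : Type*} [Field F]
    (K J : Set (Fin (n - 1))) {g : Matrix (Fin n) (Fin n) F} (hdet : g.det = 1) :
    IsLowerHessenberg (g⁻¹ * lowerShift n F * g) ∧ g ∈ upperCell F K ∧ g ∈ lowerCell F J ↔
      ∃ x b : Matrix (Fin n) (Fin n) F, IsBlockToeplitz J x ∧ x.det = 1 ∧ b.det = 1 ∧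
        b.IsLowerTriangular ∧ g = x * longestRep F J * b ∧
        (∀ i ∈ K, lowerRightMinor (x * longestRep F J) (i + 1) = 0) ∧
        ∀ i ∉ K, lowerRightMinor (x * longestRep F J) (i + 1) ≠ 0 := by
  have hminor {x b : Matrix (Fin n) (Fin n) F} (hb : b.IsLowerTriangular) (hbdet : b.det = 1)
      (hg : g = x * longestRep F J * b) (i : Fin (n - 1)) :
      lowerRightMinor g (i + 1) = 0 ↔ lowerRightMinor (x * longestRep F J) (i + 1) = 0 :=
    hg ▸ lowerRightMinor_mul_lower_eq_zero_iff _ hb (hbdet ▸ one_ne_zero) _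
  constructor
  · rintro ⟨hH, hupper, hlower⟩
    obtain ⟨x, b, hx, hbdet, hb, hg⟩ := isLowerHessenberg_conj_and_mem_lowerCell_iff.1 ⟨hH, hlower⟩
    have hK (i : Fin (n - 1)) := (hminor hb hbdet hg i).symm.trans
      ((mem_upperCell_iff hdet hH).1 hupper i)
    exact ⟨x, b, hx, hx.det_eq_one, hbdet, hb, hg, fun i => (hK i).2, fun i => mt (hK i).1⟩
  · rintro ⟨x, b, hx, -, hbdet, hb, hg, hzero, hne⟩
    obtain ⟨hH, hlower⟩ := isLowerHessenberg_conj_and_mem_lowerCell_iff.2 ⟨x, b, hx, hbdet, hb, hg⟩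
    refine ⟨hH, (mem_upperCell_iff hdet hH).2 fun i => (hminor hb hbdet hg i).trans ?_, hlower⟩
    exact ⟨not_imp_not.1 (hne i), hzero i⟩

section Bridge

variable {n : ℕ}

lemma wJ_eq_longestRep (J : Set (Fin (n - 1))) : wJ n J = longestRep ℂ J := by
  ext p q
  rw [longestRep_apply, wJ]

lemma Delta_eq_lowerRightMinor (g : Matrix (Fin n) (Fin n) ℂ) (i : Fin (n - 1)) :
    Delta n g i = lowerRightMinor g (i + 1) := by
  let e : Fin (n - (i + 1)) ≃ {k : Fin n // (i : ℕ) + 1 ≤ k} :=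
    { toFun k := ⟨⟨k + (i + 1), by omega⟩, Nat.le_add_left _ _⟩
      invFun k := ⟨k - (i + 1), by omega⟩
      left_inv k := Fin.ext (Nat.add_sub_cancel ..)
      right_inv k := Subtype.ext (Fin.ext (Nat.sub_add_cancel k.2)) }
  exact det_submatrix_equiv_self e (g.toSquareBlockProp fun k => i + 1 ≤ (k : ℕ))

lemma inBruhatPlus_iff (K : Set (Fin (n - 1))) (g : Matrix (Fin n) (Fin n) ℂ) :
    inBruhatPlus n K g ↔ g ∈ upperCell ℂ K := by
  rw [inBruhatPlus, wJ_eq_longestRep]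
  rfl

lemma inBruhatMinus_iff (J : Set (Fin (n - 1))) (g : Matrix (Fin n) (Fin n) ℂ) :
    inBruhatMinus n J g ↔ g ∈ lowerCell ℂ J := by
  rw [inBruhatMinus, wJ_eq_longestRep]
  rfl

end Bridge

/-- Corollary (description of the Richardson strata): for `K ⊆ J ⊆ [n-1]` and
`g ∈ SL_n(ℂ)`, `g` satisfies the Peterson condition and lies in
`B⁺ ẇ_K B⁻ ∩ B⁻ ẇ_J B⁻` iff `g = x ẇ_J b` with `x` a `J`-Toeplitz matrix,
`b ∈ B⁻`, `Δ_i(x ẇ_J) = 0` for `i ∈ K` and `Δ_i(x ẇ_J) ≠ 0` for `i ∉ K`. -/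
theorem richardson_stratum_description (n : ℕ) (hn : 2 ≤ n)
    (K J : Set (Fin (n-1))) (hKJ : K ⊆ J)
    (g : Matrix (Fin n) (Fin n) ℂ) (hdet : g.det = 1) :
    ((∀ i j : Fin n, (i : ℕ) + 1 < (j : ℕ) → (g⁻¹ * fMat n * g) i j = 0) ∧
        inBruhatPlus n K g ∧ inBruhatMinus n J g) ↔
      (∃ x b : Matrix (Fin n) (Fin n) ℂ,
        IsJToeplitz n J x ∧ x.det = 1 ∧ b.det = 1 ∧ lowerTri n b ∧
        g = x * wJ n J * b ∧
        (∀ i, i ∈ K → Delta n (x * wJ n J) i = 0) ∧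
        (∀ i, i ∉ K → Delta n (x * wJ n J) i ≠ 0)) := by
  simp only [Delta_eq_lowerRightMinor, inBruhatPlus_iff, inBruhatMinus_iff, wJ_eq_longestRep]
  exact richardson_stratum_description_general K J hdet

end PetersonPaper
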